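/- arXiv:math/0407379 — 3 statements merged into one kernel-verified Lean document; each statement's English description precedes it below -/
import Mathlib

section
/- The functions E₄* and E₆* on ℍ are algebraically independent over ℂ: there is no nonzero polynomial P ∈ ℂ[X, Y] such that P(E₄*(z), E₆*(z)) = 0 for all z ∈ ℍ. -/
/-- The Eisenstein series `E₄*(z) = ∑_{(m,n) ≠ (0,0)} (mz+n)^{−4}` on the upper half-plane.
(The term at `(m,n) = (0,0)` is `0^{-4} = 0` in `ℂ`, so it may be included harmlessly.) -/
noncomputable def E4star (z : ℂ) : ℂ := ∑' p : ℤ × ℤ, ((p.1 : ℂ) * z + (p.2 : ℂ)) ^ (-4 : ℤ)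

/-- The Eisenstein series `E₆*(z) = ∑_{(m,n) ≠ (0,0)} (mz+n)^{−6}` on the upper half-plane. -/
noncomputable def E6star (z : ℂ) : ℂ := ∑' p : ℤ × ℤ, ((p.1 : ℂ) * z + (p.2 : ℂ)) ^ (-6 : ℤ)

open UpperHalfPlane ModularForm EisensteinSeries Filter Topology in
/-- Lattice sum over pairs versus the normalised Eisenstein series. -/
lemma star_eq_aux {k : ℕ} (hk : 3 ≤ k) (z : ℍ) :
    ∑' p : ℤ × ℤ, ((p.1 : ℂ) * (z : ℂ) + (p.2 : ℂ)) ^ (-(k : ℤ)) =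
      2 * riemannZeta k * ModularForm.E hk z := by
  have h1 : ∑' p : ℤ × ℤ, ((p.1 : ℂ) * (z : ℂ) + (p.2 : ℂ)) ^ (-(k : ℤ)) =
      ∑' v : Fin 2 → ℤ, eisSummand k v z := by
    rw [← (finTwoArrowEquiv ℤ).symm.tsum_eq]
    simp [eisSummand, finTwoArrowEquiv_symm_apply]
  rw [h1, tsum_eisSummand_eq_riemannZeta_mul_eisensteinSeries hk z,
    show ModularForm.E hk z = (1 / 2 : ℂ) • eisensteinSeriesSIF (N := 1) 0 k z from rfl,
    eisensteinSeriesSIF_apply 0 k z, smul_eq_mul]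
  ring

open UpperHalfPlane ModularForm EisensteinSeries Filter Topology in
lemma E_tendsto_aux {k : ℕ} (hk : 3 ≤ k) (hk2 : Even k) :
    Tendsto (fun z : ℍ => ModularForm.E hk z) atImInfty (𝓝 1) := by
  have hper := SlashInvariantFormClass.periodic_comp_ofComplex (ModularForm.E hk)
    one_mem_strictPeriods_SL
  have han := ModularFormClass.analyticAt_cuspFunction_zero (ModularForm.E hk) one_pos
    one_mem_strictPeriods_SL
  have h0 : cuspFunction 1 (ModularForm.E hk) 0 = 1 := by
    have := E_qExpansion_coeff_zero hk hk2
    simpa [qExpansion_coeff] using this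
  have hc : (cuspFunction 1 (ModularForm.E hk) ∘ fun τ ↦ Function.Periodic.qParam 1 τ : ℍ → ℂ) =
      ModularForm.E hk := by
    funext τ
    simpa using eq_cuspFunction τ one_ne_zero hper
  have := han.continuousAt.tendsto.comp (qParam_tendsto_atImInfty one_pos)
  rw [hc, h0] at this
  exact this

open UpperHalfPlane ModularForm EisensteinSeries ModularGroup MatrixGroups in
lemma E_trans_aux {k : ℕ} (hk : 3 ≤ k) (n : ℤ) (z : ℍ) :
    ModularForm.E hk (S • (T ^ n • z)) = ((z : ℂ) + n) ^ k * ModularForm.E hk z := by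
  have key : ∀ (γ : SL(2, ℤ)) (w : ℍ),
      ModularForm.E hk (γ • w) = (denom γ w) ^ (k : ℤ) * ModularForm.E hk w := fun γ w =>
    SlashInvariantForm.slash_action_eqn' (ModularForm.E hk)
      (show (γ : GL (Fin 2) ℝ) ∈ 𝒮ℒ from ⟨γ, rfl⟩) w
  have hT : denom (T ^ n : SL(2, ℤ)) z = 1 := by
    simp [denom, coe_T_zpow, -map_zpow]
  rw [key, key, denom_S, coe_T_zpow_smul_eq, hT]
  simp

open UpperHalfPlane ModularForm EisensteinSeries ModularGroup MatrixGroups Polynomial in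
/-- Vanishing along a weighted ray through every point of the image. -/
lemma ray_aux (P : MvPolynomial (Fin 2) ℂ) (a b : ℂ)
    (h : ∀ z : ℍ, MvPolynomial.eval ![a * ModularForm.E (k := 4) (by norm_num) z,
      b * ModularForm.E (k := 6) (by norm_num) z] P = 0) (z : ℍ) (t : ℂ) :
    MvPolynomial.eval ![t ^ 4 * (a * ModularForm.E (k := 4) (by norm_num) z),
      t ^ 6 * (b * ModularForm.E (k := 6) (by norm_num) z)] P = 0 := by
  set x := a * ModularForm.E (k := 4) (by norm_num) z with hx
  set y := b * ModularForm.E (k := 6) (by norm_num) z with hy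
  let Q : ℂ[X] := MvPolynomial.aeval ![X ^ 4 * C x, X ^ 6 * C y] P
  have hQ : ∀ s : ℂ, Q.eval s = MvPolynomial.eval ![s ^ 4 * x, s ^ 6 * y] P := by
    intro s
    have := MvPolynomial.eval₂_comp_left (Polynomial.evalRingHom s)
      (algebraMap ℂ ℂ[X]) ![X ^ 4 * C x, X ^ 6 * C y] P
    simp only [Q, MvPolynomial.aeval_def, MvPolynomial.eval, MvPolynomial.coe_eval₂Hom]
    rw [← Polynomial.coe_evalRingHom, this]
    congr 1
    · ext c; simp
    · funext i; fin_cases i <;> simp <;> ring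
  have hQ0 : Q = 0 := by
    refine Polynomial.eq_zero_of_infinite_isRoot Q ?_
    refine Set.Infinite.mono ?_ (Set.infinite_range_of_injective
      (f := fun n : ℤ => (z : ℂ) + n) (fun m n hmn => by simpa using hmn))
    rintro _ ⟨n, rfl⟩
    have := h (S • (T ^ n • z))
    rw [E_trans_aux, E_trans_aux] at this
    rw [Set.mem_ofPred_eq, Polynomial.IsRoot, hQ, hx, hy]
    convert this using 4 <;> ring_nf
  rw [← hQ, hQ0]; simp

open UpperHalfPlane ModularForm EisensteinSeries Filter Topology in
/-- The weight zero quotient avoids any finite set at some point. -/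
lemma quot_aux (F : Set ℂ) (hF : F.Finite) : ∃ z : ℍ,
    ModularForm.E (k := 4) (by norm_num) z ≠ 0 ∧
    ModularForm.E (k := 6) (by norm_num) z ^ 2 / ModularForm.E (k := 4) (by norm_num) z ^ 3 ∉ F := by
  have h4 := E_tendsto_aux (k := 4) (by norm_num) ⟨2, rfl⟩
  have h6 := E_tendsto_aux (k := 6) (by norm_num) ⟨3, rfl⟩
  have hq := (h6.pow 2).div (h4.pow 3) (by simp)
  simp only [one_pow, div_one] at hq
  have hev := hq.eventually
    ((hF.subset (Set.sdiff_subset (t := {1}))).isClosed.isOpen_compl.mem_nhds (by simp))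
  obtain ⟨z, hz, hz0⟩ := (hev.and (h4.eventually_ne one_ne_zero)).exists
  refine ⟨z, hz0, fun hmem => hz ⟨hmem, ?_⟩⟩
  intro h1
  have hD := discriminant_eq_E₄_cube_sub_E₆_sq z
  refine discriminant_ne_zero z ?_
  rw [hD]
  rw [Set.mem_singleton_iff] at h1
  have h1' := (div_eq_one_iff_eq (pow_ne_zero 3 hz0)).1 h1
  have h2 : E₆ z ^ 2 = E₄ z ^ 3 := h1'
  rw [h2]; simp

/-- `E₄*` and `E₆*` are algebraically independent over `ℂ` as functions on the
upper half-plane. -/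
theorem E4star_E6star_algebraically_independent :
    ¬ ∃ P : MvPolynomial (Fin 2) ℂ, P ≠ 0 ∧
      ∀ z : ℂ, 0 < z.im → MvPolynomial.eval ![E4star z, E6star z] P = 0 := by
  rintro ⟨P, hP, h⟩
  apply hP
  obtain ⟨a, ha, ha'⟩ : ∃ a : ℂ, a ≠ 0 ∧ ∀ z : UpperHalfPlane,
      E4star z = a * ModularForm.E (k := 4) (by norm_num) z :=
    ⟨2 * riemannZeta (4 : ℕ), mul_ne_zero two_ne_zero
      (riemannZeta_ne_zero_of_one_lt_re (by norm_num)), fun z => star_eq_aux (by norm_num) z⟩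
  obtain ⟨b, hb, hb'⟩ : ∃ b : ℂ, b ≠ 0 ∧ ∀ z : UpperHalfPlane,
      E6star z = b * ModularForm.E (k := 6) (by norm_num) z :=
    ⟨2 * riemannZeta (6 : ℕ), mul_ne_zero two_ne_zero
      (riemannZeta_ne_zero_of_one_lt_re (by norm_num)), fun z => star_eq_aux (by norm_num) z⟩
  have h' := ray_aux P a b (fun z => by rw [← ha', ← hb']; exact h z z.2)
  have hinf : ∀ x : ℂ, x ≠ 0 → {y : ℂ | MvPolynomial.eval ![x, y] P = 0}.Infinite := by
    intro x hx hfin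
    obtain ⟨z, hz0, hz⟩ := quot_aux _ (hfin.image (fun y => y ^ 2 * a ^ 3 / (x ^ 3 * b ^ 2)))
    obtain ⟨s, hs⟩ := IsAlgClosed.exists_pow_nat_eq
      (x / (a * ModularForm.E (k := 4) (by norm_num) z)) (n := 4) (by norm_num)
    have hs' : s ^ 4 * (a * ModularForm.E (k := 4) (by norm_num) z) = x := by
      rw [hs]; field_simp
    refine hz ⟨s ^ 6 * (b * ModularForm.E (k := 6) (by norm_num) z), ?_, ?_⟩
    · have := h' z s
      rw [hs'] at this
      exact this
    · have hs0 : s ≠ 0 := by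
        rintro rfl
        exact hx (by rw [← hs']; simp)
      simp only
      rw [← hs']
      field_simp
  have hall : ∀ x : ℂ, x ≠ 0 → ∀ y, MvPolynomial.eval ![x, y] P = 0 := by
    intro x hx
    let Q : Polynomial ℂ := MvPolynomial.aeval ![Polynomial.C x, Polynomial.X] P
    have hQ : ∀ s : ℂ, Q.eval s = MvPolynomial.eval ![x, s] P := by
      intro s
      have := MvPolynomial.eval₂_comp_left (Polynomial.evalRingHom s)
        (algebraMap ℂ (Polynomial ℂ)) ![Polynomial.C x, Polynomial.X] P
      simp only [Q, MvPolynomial.aeval_def, MvPolynomial.eval, MvPolynomial.coe_eval₂Hom]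
      rw [← Polynomial.coe_evalRingHom, this]
      congr 1
      · ext c; simp
      · funext i; fin_cases i <;> simp
    have hQ0 : Q = 0 := by
      refine Polynomial.eq_zero_of_infinite_isRoot Q ((hinf x hx).mono ?_)
      intro y hy
      rw [Set.mem_ofPred_eq, Polynomial.IsRoot, hQ]
      exact hy
    intro y
    rw [← hQ, hQ0]; simp
  refine MvPolynomial.funext_set (fun _ => {0}ᶜ) (fun _ => (Set.finite_singleton 0).infinite_compl) ?_
  intro v hv
  have := hall (v 0) (hv 0 trivial) (v 1)
  rw [map_zero, ← this]
  congr 2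
  funext i; fin_cases i <;> rfl
end

section
/- Let K be a totally real number field with ring of integers 𝓞_K. Consider the action of the group SL₂(𝓞_K) on the projective line ℙ¹(K) (the projectivization of the K-vector space K²) in which a matrix acts on K² by matrix-vector multiplication (entries viewed in K). Then the set of orbits of this action is in bijection with the ideal class group of 𝓞_K. -/
open NumberField

open scoped nonZeroDivisors

namespace CuspAux

variable {K : Type*} [Field K] [NumberField K]

/-- The fractional ideal generated by the coordinates of a vector. -/
noncomputable def frac (v : Fin 2 → K) : FractionalIdeal (𝓞 K)⁰ K :=
  FractionalIdeal.spanSingleton (𝓞 K)⁰ (v 0) + FractionalIdeal.spanSingleton (𝓞 K)⁰ (v 1)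

lemma mem0 (v : Fin 2 → K) : v 0 ∈ frac v := by
  rw [frac, ← FractionalIdeal.mem_coe, FractionalIdeal.coe_add]
  exact Submodule.mem_sup_left (FractionalIdeal.mem_spanSingleton_self _ _)

lemma mem1 (v : Fin 2 → K) : v 1 ∈ frac v := by
  rw [frac, ← FractionalIdeal.mem_coe, FractionalIdeal.coe_add]
  exact Submodule.mem_sup_right (FractionalIdeal.mem_spanSingleton_self _ _)

lemma frac_le (v : Fin 2 → K) (I : FractionalIdeal (𝓞 K)⁰ K) (h0 : v 0 ∈ I) (h1 : v 1 ∈ I) :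
    frac v ≤ I := by
  rw [frac, ← FractionalIdeal.sup_eq_add]
  exact sup_le (FractionalIdeal.spanSingleton_le_iff_mem.2 h0)
    (FractionalIdeal.spanSingleton_le_iff_mem.2 h1)

lemma frac_ne (v : Fin 2 → K) (hv : v ≠ 0) : frac v ≠ 0 := by
  intro h
  apply hv
  have h0 := mem0 v
  have h1 := mem1 v
  rw [h, FractionalIdeal.mem_zero_iff] at h0 h1
  ext i
  fin_cases i
  · exact h0
  · exact h1

lemma frac_smul (t : K) (v : Fin 2 → K) :
    frac (t • v) = FractionalIdeal.spanSingleton (𝓞 K)⁰ t * frac v := by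
  simp [frac, mul_add, FractionalIdeal.spanSingleton_mul_spanSingleton]

lemma frac_mulVec_le (γ : Matrix (Fin 2) (Fin 2) (𝓞 K)) (v : Fin 2 → K) :
    frac ((γ.map (algebraMap (𝓞 K) K)).mulVec v) ≤ frac v := by
  have key : ∀ a b : 𝓞 K, algebraMap (𝓞 K) K a * v 0 + algebraMap (𝓞 K) K b * v 1 ∈ frac v := by
    intro a b
    rw [← FractionalIdeal.mem_coe, ← Algebra.smul_def, ← Algebra.smul_def]
    exact Submodule.add_mem _ (Submodule.smul_mem _ _ (mem0 v)) (Submodule.smul_mem _ _ (mem1 v))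
  apply frac_le
  · simpa [Matrix.mulVec, dotProduct, Fin.sum_univ_two] using key (γ 0 0) (γ 0 1)
  · simpa [Matrix.mulVec, dotProduct, Fin.sum_univ_two] using key (γ 1 0) (γ 1 1)

lemma frac_mulVec (γ : Matrix.SpecialLinearGroup (Fin 2) (𝓞 K)) (v : Fin 2 → K) :
    frac (((γ : Matrix (Fin 2) (Fin 2) (𝓞 K)).map (algebraMap (𝓞 K) K)).mulVec v) = frac v := by
  apply le_antisymm (frac_mulVec_le _ _)
  have h := frac_mulVec_le ((γ⁻¹ : Matrix.SpecialLinearGroup (Fin 2) (𝓞 K)) :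
    Matrix (Fin 2) (Fin 2) (𝓞 K))
    (((γ : Matrix (Fin 2) (Fin 2) (𝓞 K)).map (algebraMap (𝓞 K) K)).mulVec v)
  rw [Matrix.mulVec_mulVec, ← Matrix.map_mul, ← Matrix.SpecialLinearGroup.coe_mul,
    inv_mul_cancel] at h
  simpa using h

lemma bezout (v : Fin 2 → K) (hv : v ≠ 0) :
    ∃ p ∈ (frac v)⁻¹, ∃ q ∈ (frac v)⁻¹, v 0 * p + v 1 * q = 1 := by
  have h : (1 : K) ∈ frac v * (frac v)⁻¹ := by
    rw [mul_inv_cancel₀ (frac_ne v hv)]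
    exact FractionalIdeal.one_mem_one _
  nth_rw 1 [frac] at h
  rw [add_mul, ← FractionalIdeal.mem_coe, FractionalIdeal.coe_add, Submodule.add_eq_sup,
    Submodule.mem_sup] at h
  obtain ⟨a, ha, b, hb, hab⟩ := h
  rw [FractionalIdeal.mem_coe, FractionalIdeal.mem_singleton_mul] at ha hb
  obtain ⟨p, hp, rfl⟩ := ha
  obtain ⟨q, hq, rfl⟩ := hb
  exact ⟨p, hp, q, hq, hab⟩

lemma exists_sl (v w : Fin 2 → K) (hv : v ≠ 0) (hw : w ≠ 0) (h : frac v = frac w) :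
    ∃ γ : Matrix.SpecialLinearGroup (Fin 2) (𝓞 K),
      ((γ : Matrix (Fin 2) (Fin 2) (𝓞 K)).map (algebraMap (𝓞 K) K)).mulVec v = w := by
  obtain ⟨p, hp, q, hq, hpq⟩ := bezout v hv
  obtain ⟨r, hr, s, hs, hrs⟩ := bezout w hw
  have hI : frac v * (frac v)⁻¹ = 1 := mul_inv_cancel₀ (frac_ne v hv)
  rw [← h] at hr hs
  have w0 := mem0 w
  have w1 := mem1 w
  rw [← h] at w0 w1
  have key : ∀ a ∈ frac v, ∀ b ∈ (frac v)⁻¹, ∃ x : 𝓞 K, algebraMap (𝓞 K) K x = a * b := by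
    intro a ha b hb
    have := FractionalIdeal.mul_mem_mul ha hb
    rw [hI] at this
    exact (FractionalIdeal.mem_one_iff _).1 this
  obtain ⟨a1, ha1⟩ := key _ w0 p hp
  obtain ⟨a2, ha2⟩ := key _ (mem1 v) s hs
  obtain ⟨b1, hb1⟩ := key _ w0 q hq
  obtain ⟨b2, hb2⟩ := key _ (mem0 v) s hs
  obtain ⟨c1, hc1⟩ := key _ w1 p hp
  obtain ⟨c2, hc2⟩ := key _ (mem1 v) r hr
  obtain ⟨d1, hd1⟩ := key _ w1 q hq
  obtain ⟨d2, hd2⟩ := key _ (mem0 v) r hr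
  refine ⟨⟨!![a1 + a2, b1 - b2; c1 - c2, d1 + d2], ?_⟩, ?_⟩
  · rw [Matrix.det_fin_two_of]
    apply FaithfulSMul.algebraMap_injective (𝓞 K) K
    simp only [map_sub, map_add, map_mul, map_one, ha1, ha2, hb1, hb2, hc1, hc2, hd1, hd2]
    linear_combination (w 0 * r + w 1 * s) * hpq + hrs
  · ext i
    fin_cases i
    · simp only [Matrix.mulVec, dotProduct, Fin.sum_univ_two]
      simp [ha1, ha2, hb1, hb2]
      linear_combination (w 0) * hpq
    · simp only [Matrix.mulVec, dotProduct, Fin.sum_univ_two]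
      simp [hc1, hc2, hd1, hd2]
      linear_combination (w 1) * hpq

/-- The class of the fractional ideal of a nonzero vector. -/
noncomputable def cls (v : {v : Fin 2 → K // v ≠ 0}) :
    (FractionalIdeal (𝓞 K)⁰ K)ˣ ⧸ (toPrincipalIdeal (𝓞 K) K).range :=
  QuotientGroup.mk (Units.mk0 (frac v.1) (frac_ne v.1 v.2))

lemma cls_eq_iff (v w : {v : Fin 2 → K // v ≠ 0}) :
    cls v = cls w ↔ ∃ t : K, t ≠ 0 ∧ frac w.1 = frac (t • v.1) := by
  rw [cls, cls, QuotientGroup.eq, MonoidHom.mem_range]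
  constructor
  · rintro ⟨t, ht⟩
    refine ⟨t, t.ne_zero, ?_⟩
    rw [eq_inv_mul_iff_mul_eq] at ht
    have := congrArg Units.val ht
    simp only [Units.val_mul, Units.val_mk0, coe_toPrincipalIdeal] at this
    rw [frac_smul, ← this, mul_comm]
  · rintro ⟨t, ht0, ht⟩
    refine ⟨Units.mk0 t ht0, ?_⟩
    rw [eq_inv_mul_iff_mul_eq]
    ext1
    simp only [Units.val_mul, Units.val_mk0, coe_toPrincipalIdeal]
    rw [ht, frac_smul, mul_comm]

lemma cls_surj (c : (FractionalIdeal (𝓞 K)⁰ K)ˣ ⧸ (toPrincipalIdeal (𝓞 K) K).range) :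
    ∃ v : {v : Fin 2 → K // v ≠ 0}, cls v = c := by
  obtain ⟨c, rfl⟩ := (ClassGroup.equiv K).surjective c
  obtain ⟨I, rfl⟩ := ClassGroup.mk0_surjective c
  have hI : (I : Ideal (𝓞 K)) ≠ ⊥ := nonZeroDivisors.coe_ne_zero I
  obtain ⟨x, hx, hx0⟩ := Submodule.exists_mem_ne_zero_of_ne_bot hI
  obtain ⟨y, hy⟩ := IsDedekindDomain.exists_eq_span_pair hx hx0
  have hv : (![algebraMap (𝓞 K) K x, algebraMap (𝓞 K) K y] : Fin 2 → K) ≠ 0 := by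
    intro h
    have := congrFun h 0
    simp at this
    exact hx0 this
  refine ⟨⟨_, hv⟩, ?_⟩
  rw [ClassGroup.equiv_mk0, cls]
  change _ = QuotientGroup.mk _
  congr 1
  ext1
  simp only [Units.val_mk0, FractionalIdeal.coe_mk0]
  rw [hy, Ideal.span_insert, FractionalIdeal.coeIdeal_sup,
    FractionalIdeal.coeIdeal_span_singleton, FractionalIdeal.coeIdeal_span_singleton]
  simp [frac]

end CuspAux

/-- For a totally real number field `K` (every complex embedding has real image), the set of
orbits of the action of `SL₂(𝓞_K)` on the projective line `ℙ¹(K)` (acting through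
matrix-vector multiplication on `K²`) is in bijection with the ideal class group of `𝓞_K`. -/
theorem cusps_biject_with_class_group (K : Type*) [Field K] [NumberField K]
    (htotallyReal : ∀ φ : K →+* ℂ, ∀ x : K, (φ x).im = 0) :
    Nonempty
      (Quot (fun x y : Projectivization K (Fin 2 → K) =>
          ∃ γ : Matrix.SpecialLinearGroup (Fin 2) (RingOfIntegers K),
            ∃ (v : Fin 2 → K) (hv : v ≠ 0)
              (hw : Matrix.mulVec
                  ((γ : Matrix (Fin 2) (Fin 2) (RingOfIntegers K)).map
                    (algebraMap (RingOfIntegers K) K)) v ≠ 0),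
              Projectivization.mk K v hv = x ∧
              Projectivization.mk K
                (Matrix.mulVec
                  ((γ : Matrix (Fin 2) (Fin 2) (RingOfIntegers K)).map
                    (algebraMap (RingOfIntegers K) K)) v) hw = y)
        ≃ ClassGroup (RingOfIntegers K)) := by
  refine ⟨(Equiv.ofBijective (Quot.lift (Projectivization.lift CuspAux.cls ?_) ?_) ⟨?_, ?_⟩).trans
    (ClassGroup.equiv K).toEquiv.symm⟩
  · rintro ⟨a, ha⟩ ⟨b, hb⟩ t h
    have ht : t ≠ 0 := by
      rintro rfl
      exact ha (by simpa using h)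
    exact ((CuspAux.cls_eq_iff _ _).2 ⟨t, ht, congrArg CuspAux.frac h⟩).symm
  · rintro _ _ ⟨γ, v, hv, hw, rfl, rfl⟩
    rw [Projectivization.lift_mk, Projectivization.lift_mk, CuspAux.cls_eq_iff]
    refine ⟨1, one_ne_zero, ?_⟩
    rw [one_smul]
    exact CuspAux.frac_mulVec γ v
  · rintro ⟨x⟩ ⟨y⟩ h
    induction x using Projectivization.ind with | _ v hv =>
    induction y using Projectivization.ind with | _ w hw =>
    change CuspAux.cls ⟨v, hv⟩ = CuspAux.cls ⟨w, hw⟩ at h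
    obtain ⟨t, ht0, ht⟩ := (CuspAux.cls_eq_iff _ _).1 h
    have htv : t • v ≠ 0 := smul_ne_zero ht0 hv
    obtain ⟨γ, hγ⟩ := CuspAux.exists_sl (t • v) w htv hw ht.symm
    apply Quot.sound
    refine ⟨γ, t • v, htv, by rw [hγ]; exact hw, ?_, ?_⟩
    · exact (Projectivization.mk_eq_mk_iff' K _ _ _ _).2 ⟨t, rfl⟩
    · congr 1
  · intro c
    obtain ⟨v, rfl⟩ := CuspAux.cls_surj c
    exact ⟨Quot.mk _ (Projectivization.mk K v.1 v.2), rfl⟩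
end

section
/- Let m ≥ 1, let Ω ⊆ ℂ^m be open, let F₂, …, F_{m+1} : Ω → ℂ be holomorphic, and let r₂, …, r_{m+1} ∈ ℂ. For s ∈ {1, …, m} let D_s denote the determinant of the m×m matrix whose first row is (r₂·F₂, …, r_{m+1}·F_{m+1}) and whose remaining m−1 rows are (∂F₂/∂z_t, …, ∂F_{m+1}/∂z_t) for t ranging over {1, …, m}∖{s} in increasing order. Then ∑_{s=1}^{m} (−1)^{s−1} · ∂D_s/∂z_s = (r₂ + ⋯ + r_{m+1}) · det(∂F_i/∂z_j)_{2 ≤ i ≤ m+1, 1 ≤ j ≤ m}, as holomorphic functions on Ω. -/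
open scoped BigOperators

/-- The partial derivative `∂F/∂z_i` of a function `F : ℂ^m → ℂ`. -/
noncomputable def pd {m : ℕ} (i : Fin m) (F : (Fin m → ℂ) → ℂ) : (Fin m → ℂ) → ℂ :=
  fun z => fderiv ℂ F z (Pi.single i 1)

open Metric Set Filter Topology MeasureTheory in
theorem differentiableAt_fderiv_apply_aux {E : Type*} [NormedAddCommGroup E] [NormedSpace ℂ E]
    [MeasurableSpace E] [BorelSpace E] [FiniteDimensional ℂ E]
    {Ω : Set E} (hΩ : IsOpen Ω) {F : E → ℂ} (hF : DifferentiableOn ℂ F Ω)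
    {z₀ : E} (hz : z₀ ∈ Ω) (v : E) (hv : ‖v‖ ≤ 1) :
    DifferentiableAt ℂ (fun z => fderiv ℂ F z v) z₀ := by
  have hcont : ContinuousAt F z₀ := (hF.differentiableAt (hΩ.mem_nhds hz)).continuousAt
  have h1 : ∀ᶠ x in 𝓝 z₀, x ∈ Ω ∧ dist (F x) (F z₀) < 1 :=
    (hΩ.eventually_mem hz).and (hcont.eventually (ball_mem_nhds _ one_pos))
  obtain ⟨ε, hε, hball⟩ := Metric.eventually_nhds_iff_ball.1 h1
  obtain ⟨ρ, hρ, rfl⟩ : ∃ ρ : ℝ, 0 < ρ ∧ ε = 4 * ρ := ⟨ε / 4, by positivity, by ring⟩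
  have hd : ∀ y ∈ ball z₀ (3 * ρ), DifferentiableAt ℂ F y := fun y hy =>
    hF.differentiableAt (hΩ.mem_nhds (hball y (ball_subset_ball (by linarith) hy)).1)
  have hbd : ∀ y ∈ ball z₀ (3 * ρ), ‖fderiv ℂ F y‖ ≤ 2 / ρ := by
    intro y hy
    have hsub : ball y ρ ⊆ ball z₀ (4 * ρ) := by
      apply ball_subset_ball'
      have := mem_ball.1 hy
      linarith
    refine Complex.norm_fderiv_le_div_of_mapsTo_ball (hF.mono fun x hx => (hball x (hsub hx)).1)
      (fun x hx => ?_) hρ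
    have a := (hball x (hsub hx)).2
    have b := (hball y (hsub (mem_ball_self hρ))).2
    have := dist_triangle_right (F x) (F y) (F z₀)
    rw [mem_closedBall]
    linarith
  have hmem : ∀ z ∈ ball z₀ ρ, ∀ ζ : ℂ, ‖ζ‖ ≤ ρ → z + ζ • v ∈ ball z₀ (3 * ρ) := by
    intro z hz ζ hζ
    rw [mem_ball, dist_eq_norm] at *
    have : ‖ζ • v‖ ≤ ρ := by
      rw [norm_smul]
      calc ‖ζ‖ * ‖v‖ ≤ ρ * 1 := by gcongr
        _ = ρ := mul_one _
    calc ‖z + ζ • v - z₀‖ = ‖(z - z₀) + ζ • v‖ := by congr 1; abel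
      _ ≤ ‖z - z₀‖ + ‖ζ • v‖ := norm_add_le _ _
      _ < 3 * ρ := by linarith
  set γ : ℝ → ℂ := circleMap 0 ρ with hγ
  have hγn : ∀ θ, ‖γ θ‖ ≤ ρ := fun θ => by simp [hγ, abs_of_pos hρ]
  have hγ0 : ∀ θ, γ θ ≠ 0 := fun θ => circleMap_ne_center hρ.ne'
  have hγc : Continuous γ := continuous_circleMap 0 ρ
  set c : ℝ → ℂ := fun θ => deriv γ θ * (1 / (γ θ - 0) ^ 2) with hc
  have hcc : Continuous c := by
    have : Continuous (deriv γ) := by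
      have : deriv γ = fun θ => circleMap 0 ρ θ * Complex.I := by
        funext θ; simp [hγ]
      rw [this]; fun_prop
    simp only [hc, sub_zero]
    refine this.mul (continuous_const.div (hγc.pow 2) fun θ => pow_ne_zero 2 (hγ0 θ))
  have hFc : ∀ z ∈ ball z₀ ρ, Continuous fun θ => F (z + γ θ • v) := by
    intro z hz
    rw [continuous_iff_continuousAt]
    intro θ
    have h2 : ContinuousAt (fun θ => z + γ θ • v) θ := by fun_prop
    exact ContinuousAt.comp (f := fun θ => z + γ θ • v) (g := F)
      (hd _ (hmem z hz _ (hγn θ))).continuousAt h2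
  have key : ∀ z ∈ ball z₀ ρ, fderiv ℂ F z v =
      (2 * Real.pi * Complex.I)⁻¹ * ∫ θ in (0:ℝ)..2 * Real.pi, c θ * F (z + γ θ • v) := by
    intro z hz
    have hdz : ∀ ζ : ℂ, ‖ζ‖ ≤ ρ → HasDerivAt (fun ζ : ℂ => F (z + ζ • v))
        (fderiv ℂ F (z + ζ • v) v) ζ := by
      intro ζ hζ
      have h3 := (hd _ (hmem z hz ζ hζ)).hasFDerivAt
      have h4 : HasDerivAt (fun ζ : ℂ => z + ζ • v) v ζ := by
        simpa using ((hasDerivAt_id ζ).smul_const v).const_add z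
      exact h3.comp_hasDerivAt ζ h4
    have h5 := DifferentiableOn.deriv_eq_smul_circleIntegral (c := 0)
      (f := fun ζ : ℂ => F (z + ζ • v)) hρ
      (fun ζ hζ => (hdz ζ (by simpa using hζ)).differentiableAt.differentiableWithinAt)
    rw [(hdz 0 (by simpa using hρ.le)).deriv] at h5
    simp only [zero_smul, add_zero, smul_eq_mul] at h5
    rw [circleIntegral] at h5
    have h6 : (2 * Real.pi * Complex.I : ℂ) ≠ 0 := Complex.two_pi_I_ne_zero
    rw [eq_inv_mul_iff_mul_eq₀ h6, ← h5]
    congr 1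
    funext θ
    simp only [hc, hγ, smul_eq_mul, mul_assoc]
  have hder : DifferentiableAt ℂ (fun z => ∫ θ in (0:ℝ)..2 * Real.pi, c θ * F (z + γ θ • v)) z₀ := by
    have h7 := intervalIntegral.hasFDerivAt_integral_of_dominated_of_fderiv_le (𝕜 := ℂ)
      (μ := volume) (a := 0) (b := 2 * Real.pi) (s := ball z₀ ρ) (x₀ := z₀)
      (F := fun z θ => c θ * F (z + γ θ • v))
      (F' := fun z θ => c θ • fderiv ℂ F (z + γ θ • v))
      (bound := fun θ => ‖c θ‖ * (2 / ρ)) (ball_mem_nhds _ hρ) ?_ ?_ ?_ ?_ ?_ ?_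
    · exact h7.differentiableAt
    · filter_upwards [ball_mem_nhds z₀ hρ] with z hz
      exact (hcc.mul (hFc z hz)).aestronglyMeasurable
    · exact (hcc.mul (hFc z₀ (mem_ball_self hρ))).intervalIntegrable _ _
    · have : CompleteSpace E := FiniteDimensional.complete ℂ E
      have hm : Measurable fun θ => fderiv ℂ F (z₀ + γ θ • v) :=
        (measurable_fderiv ℂ F).comp (by fun_prop : Continuous fun θ => z₀ + γ θ • v).measurable
      exact (hcc.measurable.smul hm).aestronglyMeasurable
    · refine Eventually.of_forall fun θ _ z hz => ?_
      rw [norm_smul]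
      gcongr
      exact hbd _ (hmem z hz _ (hγn θ))
    · exact (hcc.norm.mul continuous_const).intervalIntegrable _ _
    · refine Eventually.of_forall fun θ _ z hz => ?_
      have h8 := (hd _ (hmem z hz _ (hγn θ))).hasFDerivAt
      have h9 : HasFDerivAt (fun z => F (z + γ θ • v)) (fderiv ℂ F (z + γ θ • v)) z :=
        h8.comp (f := fun z => z + γ θ • v) z ((hasFDerivAt_id z).add_const (γ θ • v))
      exact h9.const_mul (c θ)
  refine (hder.const_mul ((2 * Real.pi * Complex.I)⁻¹)).congr_of_eventuallyEq ?_
  filter_upwards [ball_mem_nhds z₀ hρ] with z hz using key z hz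

theorem pd_differentiableAt {m : ℕ} {Ω : Set (Fin m → ℂ)} (hΩ : IsOpen Ω)
    {F : (Fin m → ℂ) → ℂ} (hF : DifferentiableOn ℂ F Ω) {z : Fin m → ℂ} (hz : z ∈ Ω) (i : Fin m) :
    DifferentiableAt ℂ (pd i F) z :=
  differentiableAt_fderiv_apply_aux hΩ hF hz _ (by rw [Pi.norm_single]; simp)

open Filter Topology in
theorem pd_comm {m : ℕ} {Ω : Set (Fin m → ℂ)} (hΩ : IsOpen Ω)
    {F : (Fin m → ℂ) → ℂ} (hF : DifferentiableOn ℂ F Ω) {z : Fin m → ℂ} (hz : z ∈ Ω)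
    (s t : Fin m) : pd s (pd t F) z = pd t (pd s F) z := by
  have hrep : fderiv ℂ F = fun w => ∑ i, pd i F w • (ContinuousLinearMap.proj (R := ℂ) i :
      (Fin m → ℂ) →L[ℂ] ℂ) := by
    funext w
    ext1 v
    conv_lhs => rw [pi_eq_sum_univ' v]
    simp [map_sum, pd, mul_comm]
  have hd : DifferentiableAt ℂ (fderiv ℂ F) z := by
    rw [hrep]
    have := fun i => pd_differentiableAt hΩ hF hz i
    fun_prop
  have hp : ∀ a b, pd a (pd b F) z = fderiv ℂ (fderiv ℂ F) z (Pi.single a 1) (Pi.single b 1) := by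
    intro a b
    have h := hd.hasFDerivAt.clm_apply (hasFDerivAt_const (Pi.single b 1 : Fin m → ℂ) z)
    have h2 : fderiv ℂ (pd b F) z = _ := h.fderiv
    simp only [pd] at h2 ⊢
    rw [h2]
    simp
  rw [hp, hp]
  refine second_derivative_symmetric_of_eventually (f := F) ?_ hd.hasFDerivAt _ _
  filter_upwards [hΩ.mem_nhds hz] with y hy
  exact (hF.differentiableAt (hΩ.mem_nhds hy)).hasFDerivAt

theorem pd_det {m : ℕ} (M : (Fin m → ℂ) → Matrix (Fin m) (Fin m) ℂ) {z : Fin m → ℂ}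
    (hM : ∀ i j, DifferentiableAt ℂ (fun w => M w i j) z) (s : Fin m) :
    pd s (fun w => (M w).det) z =
      ∑ i, ((M z).updateRow i (fun j => pd s (fun w => M w i j) z)).det := by
  let D : ContinuousMultilinearMap ℂ (fun _ : Fin m => Fin m → ℂ) ℂ :=
    { (Matrix.detRowAlternating (n := Fin m) (R := ℂ)).toMultilinearMap with
      cont := by
        change Continuous fun A : Matrix (Fin m) (Fin m) ℂ => A.det
        exact continuous_id.matrix_det }
  have h := HasFDerivAt.multilinear_comp D (g := fun i w => M w i) (x := z)
    (g' := fun i => ContinuousLinearMap.pi fun j => fderiv ℂ (fun w => M w i j) z)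
    (fun i => hasFDerivAt_pi.2 fun j => (hM i j).hasFDerivAt)
  have h2 : fderiv ℂ (fun w => (M w).det) z = _ := h.fderiv
  unfold pd
  rw [h2]
  simp only [sum_apply]
  rfl

theorem cons_det {n : ℕ} (A : Matrix (Fin (n+1)) (Fin (n+1)) ℂ) (g : Fin (n+1) → ℂ)
    (s : Fin (n+1)) :
    (-1 : ℂ) ^ (s : ℕ) * (Matrix.of (Fin.cons g (fun t j => A (s.succAbove t) j)) :
      Matrix (Fin (n+1)) (Fin (n+1)) ℂ).det = (A.updateRow s g).det := by
  rw [Matrix.det_succ_row_zero, Matrix.det_succ_row _ s, Finset.mul_sum]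
  refine Finset.sum_congr rfl fun j _ => ?_
  have : (A.updateRow s g).submatrix s.succAbove j.succAbove =
      A.submatrix s.succAbove j.succAbove := by
    ext a b; simp
  rw [this, pow_add, Matrix.updateRow_self]
  simp only [Matrix.of_apply, Fin.cons_zero]
  have h2 : (Matrix.of (Fin.cons g (fun t j => A (s.succAbove t) j)) :
      Matrix (Fin (n+1)) (Fin (n+1)) ℂ).submatrix Fin.succ j.succAbove =
      A.submatrix s.succAbove j.succAbove := by
    ext a b; simp
  rw [h2]; ring

theorem sum_scaled {n : ℕ} (A : Matrix (Fin (n+1)) (Fin (n+1)) ℂ) (r : Fin (n+1) → ℂ) :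
    ∑ s, (A.updateRow s (fun j => r j * A s j)).det = (∑ j, r j) * A.det := by
  have h : ∀ s, (A.updateRow s (fun j => r j * A s j)).det = ∑ j : Fin (n+1), r j *
      ((-1) ^ (s + j : ℕ) * A s j * (A.submatrix s.succAbove j.succAbove).det) := by
    intro s
    rw [Matrix.det_succ_row _ s]
    refine Finset.sum_congr rfl fun j _ => ?_
    have : (A.updateRow s (fun j => r j * A s j)).submatrix s.succAbove j.succAbove =
        A.submatrix s.succAbove j.succAbove := by
      ext a b; simp
    rw [this, Matrix.updateRow_self]; ring
  simp_rw [h]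
  rw [Finset.sum_comm, Finset.sum_mul]
  refine Finset.sum_congr rfl fun j _ => ?_
  rw [← Finset.mul_sum, ← Matrix.det_succ_column A j]

theorem swap_rows {m : ℕ} (A : Matrix (Fin m) (Fin m) ℂ) (g h : Fin m → ℂ) {s i : Fin m}
    (hsi : s ≠ i) : ((A.updateRow s g).updateRow i h).det =
      - ((A.updateRow i g).updateRow s h).det := by
  have h1 := Matrix.det_permute (Equiv.swap s i) ((A.updateRow i g).updateRow s h)
  rw [Equiv.Perm.sign_swap hsi] at h1
  have e : ((A.updateRow i g).updateRow s h).submatrix (Equiv.swap s i) id =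
      (A.updateRow s g).updateRow i h := by
    ext a b
    simp only [Matrix.submatrix_apply, Matrix.updateRow_apply, id, Equiv.swap_apply_def]
    split_ifs <;> simp_all
  rw [e] at h1
  rw [h1]; simp

theorem pd_const_mul {m : ℕ} (s : Fin m) (c : ℂ) (F : (Fin m → ℂ) → ℂ) (z : Fin m → ℂ) :
    pd s (fun w => c * F w) z = c * pd s F z := by
  have h : fderiv ℂ (fun w => c * F w) = c • fderiv ℂ F := fderiv_const_smul_field (f := F) c
  unfold pd
  rw [h]
  rfl

/-- The determinantal identity behind the multilinear Rankin brackets: for holomorphic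
functions `F₂, …, F_{m+1}` (here `G 0, …, G n` with `m = n + 1`) on an open `Ω ⊆ ℂ^m`
and weights `r₂, …, r_{m+1}`, with `D_s` the determinant of the matrix whose first row is
`(r_j F_j)_j` and whose other rows are the gradients in the directions `t ≠ s`,
`∑_s (−1)^{s−1} ∂D_s/∂z_s = (r₂ + ⋯ + r_{m+1}) · det(∂F_i/∂z_j)`. -/
theorem determinant_derivative_identity (n : ℕ) (Ω : Set (Fin (n + 1) → ℂ))
    (hΩ : IsOpen Ω) (G : Fin (n + 1) → ((Fin (n + 1) → ℂ) → ℂ))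
    (hG : ∀ j, DifferentiableOn ℂ (G j) Ω) (r : Fin (n + 1) → ℂ) :
    ∀ z ∈ Ω,
      (∑ s : Fin (n + 1), (-1 : ℂ) ^ (s : ℕ) *
        pd s (fun w =>
          (Matrix.of (Fin.cons (fun j => r j * G j w)
            (fun t j => pd (s.succAbove t) (G j) w))).det) z)
        = (∑ j, r j) * (Matrix.of fun i j => pd j (G i) z).det := by
  intro z hz
  set A : (Fin (n + 1) → ℂ) → Matrix (Fin (n + 1)) (Fin (n + 1)) ℂ :=
    fun w => Matrix.of fun t j => pd t (G j) w with hA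
  have hAd : ∀ i j, DifferentiableAt ℂ (fun w => A w i j) z := fun i j =>
    pd_differentiableAt hΩ (hG j) hz i
  have hGd : ∀ j, DifferentiableAt ℂ (G j) z := fun j =>
    (hG j).differentiableAt (hΩ.mem_nhds hz)
  have hgd : ∀ j, DifferentiableAt ℂ (fun w => r j * G j w) z := fun j =>
    (hGd j).const_mul (r j)
  have hMd : ∀ s i j, DifferentiableAt ℂ
      (fun w => (A w).updateRow s (fun j => r j * G j w) i j) z := by
    intro s i j
    by_cases h : i = s
    · subst h; simpa using hgd j
    · simpa [Matrix.updateRow_ne h] using hAd i j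
  -- rewrite each term as the derivative of a determinant with one row replaced
  have hterm : ∀ s : Fin (n + 1), (-1 : ℂ) ^ (s : ℕ) *
        pd s (fun w =>
          (Matrix.of (Fin.cons (fun j => r j * G j w)
            (fun t j => pd (s.succAbove t) (G j) w))).det) z =
      pd s (fun w => ((A w).updateRow s (fun j => r j * G j w)).det) z := by
    intro s
    have h1 : (fun w => ((A w).updateRow s (fun j => r j * G j w)).det) =
        fun w => (-1 : ℂ) ^ (s : ℕ) * (Matrix.of (Fin.cons (fun j => r j * G j w)
            (fun t j => pd (s.succAbove t) (G j) w))).det := by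
      funext w
      exact (cons_det (A w) (fun j => r j * G j w) s).symm
    rw [h1]
    exact (pd_const_mul _ _ _ _).symm
  let f : Fin (n + 1) → Fin (n + 1) → ℂ := fun s i =>
    if i = s then 0 else
      (((A z).updateRow s (fun j => r j * G j z)).updateRow i
        (fun j => pd s (pd i (G j)) z)).det
  have hs : ∀ s, pd s (fun w => ((A w).updateRow s (fun j => r j * G j w)).det) z =
      ((A z).updateRow s (fun j => r j * A z s j)).det + ∑ i, f s i := by
    intro s
    rw [pd_det _ (hMd s) s, ← Finset.add_sum_erase _ _ (Finset.mem_univ s),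
      ← Finset.add_sum_erase _ (f s) (Finset.mem_univ s)]
    have h0 : f s s = 0 := if_pos rfl
    rw [h0, zero_add]
    congr 1
    · have h2 : (fun j => pd s (fun w => (A w).updateRow s (fun j => r j * G j w) s j) z) =
          fun j => r j * A z s j := by
        funext j
        simp only [Matrix.updateRow_self]
        simp only [hA, Matrix.of_apply]
        exact pd_const_mul _ _ _ _
      rw [h2]
      congr 1
      ext a b
      by_cases h : a = s
      · subst h; simp
      · simp [Matrix.updateRow_ne h]
    · refine Finset.sum_congr rfl fun i hi => ?_
      have his : i ≠ s := (Finset.mem_erase.1 hi).1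
      simp only [f, if_neg his, Matrix.updateRow_ne his]
      rfl
  have hanti : ∀ s i, f s i = - f i s := by
    intro s i
    by_cases h : i = s
    · subst h; simp [f]
    · simp only [f, if_neg h, if_neg (Ne.symm h)]
      rw [swap_rows _ _ _ (Ne.symm h)]
      have h3 : (fun j => pd s (pd i (G j)) z) = fun j => pd i (pd s (G j)) z := by
        funext j; exact pd_comm hΩ (hG j) hz s i
      rw [h3]
  have hzero : ∑ s, ∑ i, f s i = 0 := by
    have h4 : ∑ s, ∑ i, f s i = - ∑ s, ∑ i, f s i := by
      conv_lhs => rw [Finset.sum_comm]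
      rw [← Finset.sum_neg_distrib]
      refine Finset.sum_congr rfl fun s _ => ?_
      rw [← Finset.sum_neg_distrib]
      exact Finset.sum_congr rfl fun i _ => hanti i s
    exact self_eq_neg.1 h4
  simp_rw [hterm, hs]
  rw [Finset.sum_add_distrib, hzero, add_zero, sum_scaled]
  congr 1
  rw [← Matrix.det_transpose]
  rfl
end
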